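/- The two-color Ramsey number satisfies R(C_4, B_{17}) ≤ 28; that is, every red/blue coloring of the edges of the complete graph on 28 vertices contains a red cycle of length 4 or a blue copy of the book B_{17}. -/

import Mathlib

open SimpleGraph

/-- A graph bundled with its vertex type. -/
structure VGraph : Type 1 where
  V : Type
  G : SimpleGraph V

/-- The cycle `C₄` as a bundled graph. -/
def C4 : VGraph := ⟨Fin 4, SimpleGraph.cycleGraph 4⟩

/-- The path `P₃` (on 3 vertices) as a bundled graph. -/
def P3 : VGraph := ⟨Fin 3, SimpleGraph.pathGraph 3⟩

/-- The complete graph `K_k` as a bundled graph. -/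
def Kc (k : ℕ) : VGraph := ⟨Fin k, ⊤⟩

/-- The star `K_{1,k}`: vertex `0` is the center, joined to the `k` leaves. -/
def starGraph (k : ℕ) : SimpleGraph (Fin (k + 1)) :=
  SimpleGraph.fromRel (fun u _ => u = 0)

/-- The book `B_k = K₂ + kK₁`: vertices `0, 1` form the spine, joined
to everything; the `k` pages are pairwise nonadjacent. -/
def bookGraph (k : ℕ) : SimpleGraph (Fin (k + 2)) :=
  SimpleGraph.fromRel (fun u _ => u.val < 2)

/-- Deletion of a vertex (with all incident edges) from a bundled graph. -/
def VGraph.delete (X : VGraph) (w : X.V) : VGraph :=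
  ⟨{v : X.V // v ≠ w}, X.G.induce {v | v ≠ w}⟩

/-- Disjoint union with a single isolated vertex, `G ∪ K₁`. -/
def VGraph.addK1 (X : VGraph) : VGraph :=
  ⟨Option X.V, SimpleGraph.fromRel (fun u v => ∃ a b, u = some a ∧ v = some b ∧ X.G.Adj a b)⟩

/-- `ramseyProp l N` : every coloring of the edges of the complete graph on `N`
vertices with `l.length` colors admits, for some color `i`, a subgraph isomorphic
to the `i`-th graph of `l` all of whose edges have color `i`. -/
def ramseyProp (l : List VGraph) (N : ℕ) : Prop :=
  ∀ c : Sym2 (Fin N) → Fin l.length,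
    ∃ (i : Fin l.length) (f : (l.get i).V ↪ Fin N),
      ∀ u v, (l.get i).G.Adj u v → c s(f u, f v) = i

/-- The Ramsey number of a list of graphs: the least positive `N`
satisfying `ramseyProp l N`. -/
noncomputable def ramseyNumber (l : List VGraph) : ℕ :=
  sInf {N | 0 < N ∧ ramseyProp l N}

set_option maxHeartbeats 2000000 in
/-- Counting core: a `C₄`-free graph on 28 vertices has two nonadjacent vertices whose
neighbourhoods cover at most 9 vertices. -/
theorem core17 (G : SimpleGraph (Fin 28)) [DecidableRel G.Adj]
    (hC : ∀ u v, u ≠ v → (G.neighborFinset u ∩ G.neighborFinset v).card ≤ 1)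
    (hB : ∀ u v, u ≠ v → ¬ G.Adj u v →
      10 + (G.neighborFinset u ∩ G.neighborFinset v).card ≤ G.degree u + G.degree v) : False := by
  classical
  set L : Finset (Fin 28) := Finset.univ.filter (fun v => G.degree v ≤ 5) with hL
  have memL : ∀ v, v ∈ L ↔ G.degree v ≤ 5 := by intro v; simp [hL]
  -- two low neighbours of a common vertex are adjacent
  have hadj : ∀ w a b, a ≠ b → G.Adj w a → G.Adj w b → a ∈ L → b ∈ L → G.Adj a b := by
    intro w a b hab ha hb hla hlb
    by_contra hn
    have h1 := hB a b hab hn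
    have h2 : 0 < (G.neighborFinset a ∩ G.neighborFinset b).card :=
      Finset.card_pos.mpr ⟨w, by simp [ha.symm, hb.symm]⟩
    have h3 := (memL a).1 hla
    have h4 := (memL b).1 hlb
    omega
  -- each vertex has at most two low neighbours
  have htwo : ∀ w, (G.neighborFinset w ∩ L).card ≤ 2 := by
    intro w
    by_contra hcon
    have : 2 < (G.neighborFinset w ∩ L).card := by omega
    obtain ⟨a, b, c, ha, hb, hc, hab, hac, hbc⟩ := Finset.two_lt_card_iff.1 this
    simp only [Finset.mem_inter, mem_neighborFinset] at ha hb hc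
    have e1 := hadj w a b hab ha.1 hb.1 ha.2 hb.2
    have e2 := hadj w a c hac ha.1 hc.1 ha.2 hc.2
    have h1 := hC w a ha.1.ne
    have h2 : 1 < (G.neighborFinset w ∩ G.neighborFinset a).card :=
      Finset.one_lt_card.2 ⟨b, by simp [hb.1, e1], c, by simp [hc.1, e2], hbc⟩
    omega
  -- double counting
  have hdc : ∑ u, ∑ v, (G.neighborFinset u ∩ G.neighborFinset v).card
      = ∑ w, G.degree w * G.degree w := by
    have h1 : ∀ u v, (G.neighborFinset u ∩ G.neighborFinset v).card
        = ∑ w, (if G.Adj w u then 1 else 0) * (if G.Adj w v then 1 else 0) := by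
      intro u v
      rw [Finset.card_eq_sum_ones, ← Finset.sum_filter_add_sum_filter_not Finset.univ
        (fun w => G.Adj w u ∧ G.Adj w v)]
      rw [Finset.sum_congr (s₂ := Finset.univ.filter (fun w => G.Adj w u ∧ G.Adj w v))
        (g := fun _ => 1) (by ext w; simp [G.adj_comm]) (by simp)]
      rw [Finset.sum_eq_zero (s := Finset.univ.filter (fun w => ¬ (G.Adj w u ∧ G.Adj w v))), add_zero]
      · apply Finset.sum_congr rfl
        intro w hw
        simp only [Finset.mem_filter] at hw
        simp [hw.2.1, hw.2.2]
      · intro w hw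
        simp only [Finset.mem_filter] at hw
        by_cases h : G.Adj w u
        · have : ¬ G.Adj w v := fun hq => hw.2 ⟨h, hq⟩
          simp [this]
        · simp [h]
    have hdeg : ∀ w, G.degree w = ∑ u, (if G.Adj w u then 1 else 0) := by
      intro w
      rw [← card_neighborFinset_eq_degree, neighborFinset_eq_filter, Finset.card_filter]
    simp_rw [h1]
    calc ∑ u, ∑ v, ∑ w, (if G.Adj w u then 1 else 0) * (if G.Adj w v then 1 else 0)
        = ∑ u, ∑ w, ∑ v, (if G.Adj w u then 1 else 0) * (if G.Adj w v then 1 else 0) :=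
          Finset.sum_congr rfl (fun u _ => Finset.sum_comm)
      _ = ∑ w, ∑ u, ∑ v, (if G.Adj w u then 1 else 0) * (if G.Adj w v then 1 else 0) :=
          Finset.sum_comm
      _ = ∑ w, G.degree w * G.degree w := by
          refine Finset.sum_congr rfl (fun w _ => ?_)
          rw [hdeg w, Finset.sum_mul_sum]
  -- row bounds
  have hrow : ∀ u, ∑ v, (G.neighborFinset u ∩ G.neighborFinset v).card
      ≤ G.degree u + 27 := by
    intro u
    rw [← Finset.add_sum_erase _ _ (Finset.mem_univ u)]
    have h := Finset.sum_le_card_nsmul (Finset.univ.erase u)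
      (fun v => (G.neighborFinset u ∩ G.neighborFinset v).card) 1
      (fun v hv => hC u v (Finset.ne_of_mem_erase hv).symm)
    rw [Finset.card_erase_of_mem (Finset.mem_univ u)] at h
    simp only [Finset.inter_self, card_neighborFinset_eq_degree]
    simp at h
    omega
  have hrowL : ∀ u ∈ L, ∑ v, (G.neighborFinset u ∩ G.neighborFinset v).card + L.card
      ≤ G.degree u + 30 := by
    intro u hu
    rw [← Finset.add_sum_erase _ _ (Finset.mem_univ u)]
    have h : ∑ v ∈ Finset.univ.erase u, (G.neighborFinset u ∩ G.neighborFinset v).card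
        + ((L.erase u) \ (G.neighborFinset u ∩ L)).card ≤ 27 := by
      have hs : (L.erase u) \ (G.neighborFinset u ∩ L) ⊆ Finset.univ.erase u := by
        intro x hx
        exact Finset.mem_erase.2 ⟨(Finset.mem_erase.1 (Finset.mem_sdiff.1 hx).1).1, Finset.mem_univ x⟩
      rw [← Finset.sum_sdiff hs]
      have hz : ∑ v ∈ (L.erase u) \ (G.neighborFinset u ∩ L),
          (G.neighborFinset u ∩ G.neighborFinset v).card = 0 := by
        apply Finset.sum_eq_zero
        intro v hv
        simp only [Finset.mem_sdiff, Finset.mem_erase, Finset.mem_inter, mem_neighborFinset] at hv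
        have h1 := hB u v hv.1.1.symm (fun h => hv.2 ⟨h, hv.1.2⟩)
        have h3 := (memL u).1 hu
        have h4 := (memL v).1 hv.1.2
        omega
      have h := Finset.sum_le_card_nsmul (Finset.univ.erase u \ ((L.erase u) \ (G.neighborFinset u ∩ L)))
        (fun v => (G.neighborFinset u ∩ G.neighborFinset v).card) 1
        (fun v hv => hC u v (Finset.ne_of_mem_erase (Finset.mem_sdiff.1 hv).1).symm)
      have h5 := Finset.card_sdiff_add_card_eq_card hs
      rw [Finset.card_erase_of_mem (Finset.mem_univ u), Finset.card_univ, Fintype.card_fin] at h5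
      rw [smul_eq_mul, mul_one] at h
      omega
    have h6 := Finset.le_card_sdiff (G.neighborFinset u ∩ L) (L.erase u)
    have h7 := htwo u
    rw [Finset.card_erase_of_mem hu] at h6
    have h8 := Finset.card_pos.2 ⟨u, hu⟩
    simp only [Finset.inter_self, card_neighborFinset_eq_degree]
    omega
  have hcard : L.card + Lᶜ.card = 28 := by
    rw [Finset.card_add_card_compl, Fintype.card_fin]
  -- total upper bounds
  have htot1 : ∑ w, (G.degree w * G.degree w : ℤ) ≤ ∑ w, (G.degree w : ℤ) + 756 := by
    have := Finset.sum_le_sum (fun u (_ : u ∈ Finset.univ) => hrow u)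
    rw [hdc, Finset.sum_add_distrib] at this
    simp at this
    exact_mod_cast this
  have hrowI : ∀ u, ((∑ v, (G.neighborFinset u ∩ G.neighborFinset v).card : ℕ) : ℤ)
      ≤ G.degree u + 27 + (if u ∈ L then 3 - (L.card : ℤ) else 0) := by
    intro u
    split_ifs with h
    · have := hrowL u h
      zify at this ⊢
      linarith
    · have := hrow u
      zify at this ⊢
      linarith
  have htot2 : ∑ w, (G.degree w * G.degree w : ℤ)
      ≤ ∑ w, (G.degree w : ℤ) + 756 + L.card * (3 - (L.card : ℤ)) := by
    have := Finset.sum_le_sum (fun u (_ : u ∈ Finset.univ) => hrowI u)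
    rw [← Nat.cast_sum, hdc, Finset.sum_add_distrib, Finset.sum_add_distrib,
      Finset.sum_ite_mem, Finset.univ_inter, Finset.sum_const, Finset.sum_const] at this
    push_cast at this
    simpa using this
  -- the function d(d-1)
  have hnn : ∀ w, (0 : ℤ) ≤ G.degree w * G.degree w - G.degree w := by
    intro w
    have : G.degree w ≤ G.degree w * G.degree w := Nat.le_mul_self _
    have : (G.degree w : ℤ) ≤ G.degree w * G.degree w := by exact_mod_cast this
    linarith
  have hsum : ∑ w, ((G.degree w : ℤ) * G.degree w - G.degree w)
      = ∑ w, (G.degree w * G.degree w : ℤ) - ∑ w, (G.degree w : ℤ) := by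
    rw [Finset.sum_sub_distrib]
  have hsplit := Finset.sum_add_sum_compl L (fun w => (G.degree w : ℤ) * G.degree w - G.degree w)
  have hhigh : (Lᶜ.card : ℤ) * 30 ≤ ∑ w ∈ Lᶜ, ((G.degree w : ℤ) * G.degree w - G.degree w) := by
    have := Finset.card_nsmul_le_sum Lᶜ (fun w => (G.degree w : ℤ) * G.degree w - G.degree w) 30
      (fun w hw => by
        have h : ¬ G.degree w ≤ 5 := fun h => (Finset.mem_compl.1 hw) ((memL w).2 h)
        have : (6 : ℤ) ≤ G.degree w := by exact_mod_cast (by omega : 6 ≤ G.degree w)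
        nlinarith)
    simpa using this
  by_cases hmin : ∀ v, 5 ≤ G.degree v
  · have hlow : (L.card : ℤ) * 20 ≤ ∑ w ∈ L, ((G.degree w : ℤ) * G.degree w - G.degree w) := by
      have := Finset.card_nsmul_le_sum L (fun w => (G.degree w : ℤ) * G.degree w - G.degree w) 20
        (fun w hw => by
          have : (5 : ℤ) ≤ G.degree w := by exact_mod_cast hmin w
          nlinarith)
      simpa using this
    have hcZ : (L.card : ℤ) + Lᶜ.card = 28 := by exact_mod_cast hcard
    nlinarith [sq_nonneg (2 * (L.card : ℤ) - 13)]
  · push Not at hmin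
    obtain ⟨v, hv⟩ := hmin
    by_cases h4 : G.degree v = 4
    · have hvL : v ∈ L := (memL v).2 (by omega)
      have hsub : L ⊆ insert v (G.neighborFinset v ∩ L) := by
        intro u hu
        by_cases huv : u = v
        · simp [huv]
        · by_cases ha : G.Adj v u
          · simp [ha, hu]
          · have h1 := hB v u (Ne.symm huv) ha
            have h2 := (memL u).1 hu
            omega
      have h1 := (Finset.card_le_card hsub).trans (Finset.card_insert_le _ _)
      have h2 := htwo v
      have h3 := Finset.single_le_sum (fun w (_ : w ∈ L) => hnn w) hvL
      simp only [h4] at h3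
      have h5 : (25 : ℤ) ≤ Lᶜ.card := by exact_mod_cast (by omega : 25 ≤ Lᶜ.card)
      norm_num at h3
      rw [Finset.sum_sub_distrib (s := L)] at hsplit
      linarith
    · have h5 := Finset.card_add_card_compl (insert v (G.neighborFinset v))
      have h6 := Finset.card_insert_le v (G.neighborFinset v)
      rw [card_neighborFinset_eq_degree] at h6
      rw [Fintype.card_fin] at h5
      have h7 := Finset.card_nsmul_le_sum (insert v (G.neighborFinset v))ᶜ
        (fun w => (G.degree w : ℤ) * G.degree w - G.degree w) 42
        (fun w hw => by
          simp only [Finset.mem_compl, Finset.mem_insert, mem_neighborFinset, not_or] at hw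
          have := hB v w (Ne.symm hw.1) hw.2
          have : (7 : ℤ) ≤ G.degree w := by exact_mod_cast (by omega : 7 ≤ G.degree w)
          nlinarith)
      have h8 := Finset.sum_le_sum_of_subset_of_nonneg
        (Finset.subset_univ (insert v (G.neighborFinset v))ᶜ) (fun w _ _ => hnn w)
      have h9 : (24 : ℤ) ≤ (insert v (G.neighborFinset v))ᶜ.card := by
        exact_mod_cast (by omega : 24 ≤ (insert v (G.neighborFinset v))ᶜ.card)
      rw [nsmul_eq_mul] at h7
      linarith

theorem ramsey17 : ramseyProp [C4, ⟨Fin 19, bookGraph 17⟩] 28 := by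
  classical
  intro c
  by_contra hno
  let G : SimpleGraph (Fin 28) := SimpleGraph.fromRel (fun u v => c s(u, v) = (0 : Fin 2))
  have hG : ∀ u v, G.Adj u v ↔ u ≠ v ∧ c s(u, v) = (0 : Fin 2) := by
    intro u v
    simp only [G, SimpleGraph.fromRel_adj]
    rw [Sym2.eq_swap (a := v) (b := u), or_self]
  have hG1 : ∀ u v, u ≠ v → ¬ G.Adj u v → c s(u, v) = (1 : Fin 2) := by
    intro u v huv h
    have h0 : ¬ c s(u, v) = (0 : Fin 2) := fun hq => h ((hG u v).2 ⟨huv, hq⟩)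
    have : ∀ x : Fin 2, ¬ x = 0 → x = 1 := by decide
    exact this _ h0
  refine core17 G ?_ ?_
  · intro u v huv
    by_contra hcon
    obtain ⟨a, ha, b, hb, hab⟩ := Finset.one_lt_card.1 (not_le.1 hcon)
    simp only [Finset.mem_inter, mem_neighborFinset] at ha hb
    refine hno ⟨(0 : Fin 2), ⟨(![u, a, v, b] : Fin 4 → Fin 28), ?_⟩, ?_⟩
    · have h1 := ha.1.ne
      have h2 := ha.2.ne
      have h3 := hb.1.ne
      have h4 := hb.2.ne
      change Function.Injective (![u, a, v, b] : Fin 4 → Fin 28)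
      intro x y hxy
      fin_cases x <;> fin_cases y <;> simp_all
    · change ∀ x y : Fin 4, (SimpleGraph.cycleGraph 4).Adj x y →
        c s((![u, a, v, b] : Fin 4 → Fin 28) x, (![u, a, v, b] : Fin 4 → Fin 28) y) = (0 : Fin 2)
      intro x y hxy
      refine ((hG _ _).1 ?_).2
      have s1 := ha.1.symm
      have s2 := ha.2.symm
      have s3 := hb.1.symm
      have s4 := hb.2.symm
      obtain ⟨a1, a2⟩ := ha
      obtain ⟨b1, b2⟩ := hb
      revert hxy
      fin_cases x <;> fin_cases y <;> first
        | (intro _; assumption)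
        | (intro h; exact absurd h (by decide))
  · intro u v huv hn
    by_contra hcon
    have hu := Finset.card_union_add_card_inter (G.neighborFinset u) (G.neighborFinset v)
    simp only [card_neighborFinset_eq_degree] at hu
    set S : Finset (Fin 28) := (insert u (insert v (G.neighborFinset u ∪ G.neighborFinset v)))ᶜ
      with hS
    have hSc : 17 ≤ S.card := by
      have h1 := Finset.card_add_card_compl (insert u (insert v (G.neighborFinset u ∪ G.neighborFinset v)))
      have h2 := Finset.card_insert_le u (insert v (G.neighborFinset u ∪ G.neighborFinset v))
      have h3 := Finset.card_insert_le v (G.neighborFinset u ∪ G.neighborFinset v)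
      rw [Fintype.card_fin, ← hS] at h1
      omega
    let g : Fin 17 → Fin 28 := fun i => S.orderEmbOfFin rfl (Fin.castLE hSc i)
    have hginj : Function.Injective g := fun i j h => by
      simpa [g] using h
    have hgS : ∀ i, g i ≠ u ∧ g i ≠ v ∧ ¬ G.Adj u (g i) ∧ ¬ G.Adj v (g i) := by
      intro i
      have : g i ∈ S := S.orderEmbOfFin_mem rfl _
      simpa [hS] using this
    let f : Fin 19 → Fin 28 := Fin.cons u (Fin.cons v g : Fin 18 → Fin 28)
    have f0 : f 0 = u := rfl
    have f1 : f 1 = v := rfl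
    have f2 : ∀ i : Fin 17, f i.succ.succ = g i := fun i => rfl
    have hcase : ∀ x : Fin 19, x = 0 ∨ x = 1 ∨ ∃ i : Fin 17, x = i.succ.succ := by
      intro x
      refine Fin.cases (Or.inl rfl) (fun y => Or.inr ?_) x
      exact Fin.cases (Or.inl rfl) (fun z => Or.inr ⟨z, rfl⟩) y
    have hinj : Function.Injective f := by
      refine Fin.cons_injective_iff.2 ⟨?_, Fin.cons_injective_iff.2 ⟨?_, hginj⟩⟩
      · rintro ⟨y, hy⟩
        revert hy
        refine Fin.cases (fun h => huv h.symm) (fun z h => (hgS z).1 h) y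
      · rintro ⟨y, hy⟩
        exact (hgS y).2.1 hy
    have hnadj : ∀ x y : Fin 19, x.val < 2 → x ≠ y → ¬ G.Adj (f x) (f y) := by
      intro x y hx hxy
      rcases hcase x with rfl | rfl | ⟨i, rfl⟩
      · rcases hcase y with rfl | rfl | ⟨j, rfl⟩
        · exact absurd rfl hxy
        · exact hn
        · exact (hgS j).2.2.1
      · rcases hcase y with rfl | rfl | ⟨j, rfl⟩
        · exact fun h => hn h.symm
        · exact absurd rfl hxy
        · exact (hgS j).2.2.2
      · simp at hx
    refine hno ⟨(1 : Fin 2), ⟨f, hinj⟩, ?_⟩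
    change ∀ x y : Fin 19, (bookGraph 17).Adj x y → c s(f x, f y) = (1 : Fin 2)
    intro x y hxy
    rw [bookGraph, SimpleGraph.fromRel_adj] at hxy
    refine hG1 _ _ (fun h => hxy.1 (hinj h)) ?_
    rcases hxy.2 with h | h
    · exact hnadj x y h hxy.1
    · exact fun hq => hnadj y x h hxy.1.symm hq.symm

/-- `R(C₄, B₁₇) ≤ 28`. -/
theorem statement17 : ramseyNumber [C4, ⟨Fin 19, bookGraph 17⟩] ≤ 28 := by
  exact Nat.sInf_le ⟨by norm_num, ramsey17⟩
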